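/- Let K be a compact subset of ℝ^d and let B be a separable Banach space with an injective continuous linear map ι : B → C(K, ℝ). Let {X₁(x)}_{x∈K} and {X₂(x)}_{x∈K} be two centered Gaussian random fields on K with almost surely continuous sample paths, defined on a common probability space, which are independent as random elements of C(K, ℝ). Then for every r > 0, P( X₁ + X₂ ∈ ι({h ∈ B : ‖h‖_B ≤ r}) ) ≤ P( X₁ ∈ ι({h ∈ B : ‖h‖_B ≤ r}) ); equivalently, P(X₁ + X₂ ∈ ι(B) and ‖X₁ + X₂‖_B ≤ r) ≤ P(X₁ ∈ ι(B) and ‖X₁‖_B ≤ r). -/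

import Mathlib

open MeasureTheory ProbabilityTheory

/-- Midpoint Prékopa–Leindler property of a measure. -/
def PLProp {V : Type*} [AddCommGroup V] [Module ℝ V] [MeasurableSpace V] (μ : Measure V) : Prop :=
  ∀ f g h : V → ENNReal, Measurable f → Measurable g → Measurable h →
    (∀ x y, f x * g y ≤ h ((1 / 2 : ℝ) • (x + y)) ^ 2) →
    (∫⁻ x, f x ∂μ) * (∫⁻ x, g x ∂μ) ≤ (∫⁻ x, h x ∂μ) ^ 2

lemma bm_compact (A B S : Set ℝ) (hA : IsCompact A) (hB : IsCompact B) (hA0 : A.Nonempty)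
    (hB0 : B.Nonempty) (hS : ∀ a ∈ A, ∀ b ∈ B, a + b ∈ S) :
    volume A + volume B ≤ volume S := by
  obtain ⟨a0, ha0, ha⟩ := hA.exists_isGreatest hA0
  obtain ⟨b0, hb0, hb⟩ := hB.exists_isLeast hB0
  have h1 : volume ((fun x => x + b0) '' A) = volume A := by simp
  have h2 : volume ((fun x => a0 + x) '' B) = volume B := by simp
  rw [← h1, ← h2, ← measure_union₀]
  · apply measure_mono
    rintro x (⟨a, h, rfl⟩ | ⟨b, h, rfl⟩)
    · exact hS _ h _ hb0
    · exact hS _ ha0 _ h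
  · exact ((hB.image (by fun_prop)).measurableSet).nullMeasurableSet
  · refine measure_mono_null (t := {a0 + b0}) ?_ (by simp)
    rintro x ⟨⟨a, h, rfl⟩, ⟨b, h', hh⟩⟩
    have := ha h
    have := hb h'
    simp only [Set.mem_singleton_iff] at *
    linarith

lemma bm_meas (A B S : Set ℝ) (hA : MeasurableSet A) (hB : MeasurableSet B) (hA0 : A.Nonempty)
    (hB0 : B.Nonempty) (hS : ∀ a ∈ A, ∀ b ∈ B, a + b ∈ S) :
    volume A + volume B ≤ volume S := by
  obtain ⟨a0, ha0⟩ := hA0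
  obtain ⟨b0, hb0⟩ := hB0
  have key : ∀ C ⊆ A, IsCompact C → ∀ D ⊆ B, IsCompact D → volume C + volume D ≤ volume S := by
    intro C hC hC' D hD hD'
    calc volume C + volume D ≤ volume (insert a0 C) + volume (insert b0 D) := by
          gcongr <;> exact Set.subset_insert _ _
      _ ≤ volume S := by
          apply bm_compact _ _ _ (hC'.insert a0) (hD'.insert b0) (Set.insert_nonempty _ _)
            (Set.insert_nonempty _ _)
          intro a h b h'
          exact hS _ (Set.insert_subset ha0 hC h) _ (Set.insert_subset hb0 hD h')
  by_cases hT : volume S = ⊤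
  · simp [hT]
  have hC : ∀ C ⊆ A, IsCompact C → volume C ≤ volume S := fun C h h' =>
    le_trans (by simp) (key C h h' ∅ (by simp) isCompact_empty)
  have hD : ∀ D ⊆ B, IsCompact D → volume D ≤ volume S := fun D h h' =>
    le_trans (by simp) (key ∅ (by simp) isCompact_empty D h h')
  have step1 : ∀ C ⊆ A, IsCompact C → volume C + volume B ≤ volume S := by
    intro C h h'
    rw [add_comm]
    refine add_le_of_le_tsub_right_of_le (hC C h h') ?_
    rw [hB.measure_eq_iSup_isCompact]
    refine iSup_le fun D => iSup_le fun hDB => iSup_le fun hDc => ?_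
    refine ENNReal.le_sub_of_add_le_right (ne_top_of_le_ne_top hT (hC C h h')) ?_
    rw [add_comm]
    exact key C h h' D hDB hDc
  have hB' : volume B ≤ volume S := le_trans (by simp) (step1 ∅ (by simp) isCompact_empty)
  refine add_le_of_le_tsub_right_of_le hB' ?_
  rw [hA.measure_eq_iSup_isCompact]
  refine iSup_le fun C => iSup_le fun hCA => iSup_le fun hCc => ?_
  exact ENNReal.le_sub_of_add_le_right (ne_top_of_le_ne_top hT hB') (step1 C hCA hCc)

lemma pl_one (f g h : ℝ → ENNReal) (hf : Measurable f) (hg : Measurable g) (hh : Measurable h)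
    (hf1 : ∀ x, f x ≤ 1) (hg1 : ∀ x, g x ≤ 1) (hfs : ∀ t < 1, ∃ x, t < f x)
    (hgs : ∀ t < 1, ∃ x, t < g x)
    (H : ∀ x y, f x * g y ≤ h ((1 / 2 : ℝ) • (x + y)) ^ 2) :
    (∫⁻ x, f x) + (∫⁻ x, g x) ≤ 2 * ∫⁻ x, h x := by
  have lc : ∀ u : ℝ → ENNReal, Measurable u → (∀ x, u x ≤ 1) →
      ∫⁻ x, u x = ∫⁻ t in Set.Ioo (0:ℝ) 1, volume {x | ENNReal.ofReal t < u x} := by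
    intro u hu hu1
    have hne : ∀ x, u x ≠ ⊤ := fun x => ne_top_of_le_ne_top (by simp) (hu1 x)
    have h1 := lintegral_eq_lintegral_meas_lt (volume : Measure ℝ) (f := fun x => (u x).toReal)
      (Filter.Eventually.of_forall fun x => ENNReal.toReal_nonneg) hu.ennreal_toReal.aemeasurable
    simp only [ENNReal.ofReal_toReal (hne _)] at h1
    rw [h1]
    have h2 : ∀ t ∈ Set.Ioi (0:ℝ), volume {x | t < (u x).toReal} =
        (Set.Ioo (0:ℝ) 1).indicator (fun t => volume {x | ENNReal.ofReal t < u x}) t := by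
      intro t ht
      by_cases h : t < 1
      · rw [Set.indicator_of_mem (show t ∈ Set.Ioo (0:ℝ) 1 from ⟨ht, h⟩)]
        congr 1; ext x
        exact (ENNReal.ofReal_lt_iff_lt_toReal (le_of_lt ht) (hne x)).symm
      · rw [Set.indicator_of_notMem (fun hh => h hh.2)]
        convert measure_empty (μ := (volume : Measure ℝ))
        ext x
        simp only [Set.mem_ofPred_eq, Set.mem_empty_iff_false, iff_false, not_lt]
        have := ENNReal.toReal_mono (by simp) (hu1 x)
        simp at this
        linarith
    rw [setLIntegral_congr_fun measurableSet_Ioi h2, setLIntegral_indicator measurableSet_Ioo]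
    congr 2
    ext t; simp +contextual
  set k : ℝ → ENNReal := fun x => min (h x) 1
  have hk : Measurable k := hh.min measurable_const
  have hkh : ∫⁻ x, k x ≤ ∫⁻ x, h x := lintegral_mono fun x => min_le_left _ _
  refine le_trans ?_ (mul_le_mul_right hkh 2)
  rw [lc f hf hf1, lc g hg hg1, lc k hk (fun x => min_le_right _ _)]
  have mm : ∀ u : ℝ → ENNReal, Measurable (fun t : ℝ => volume {x | ENNReal.ofReal t < u x}) := by
    intro u
    apply Antitone.measurable
    intro s t hst
    apply measure_mono
    intro x hx
    exact lt_of_le_of_lt (ENNReal.ofReal_le_ofReal hst) hx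
  rw [← lintegral_add_left (mm f), ← lintegral_const_mul _ (mm k)]
  apply setLIntegral_mono' measurableSet_Ioo
  intro t ht
  have ht1 : ENNReal.ofReal t < 1 := by simpa using ht.2
  have := bm_meas {x | ENNReal.ofReal t < f x} {x | ENNReal.ofReal t < g x}
    ((fun x => (1/2:ℝ) * x) ⁻¹' {x | ENNReal.ofReal t < k x})
    (measurableSet_lt measurable_const hf) (measurableSet_lt measurable_const hg)
    (hfs _ ht1) (hgs _ ht1) ?_
  · refine this.trans ?_
    rw [Real.volume_preimage_mul_left (by norm_num)]
    simp
  · intro a ha b hb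
    refine lt_min ?_ ht1
    have h3 : ENNReal.ofReal t ^ 2 < h ((1 / 2 : ℝ) • (a + b)) ^ 2 := by
      refine lt_of_lt_of_le ?_ (H a b)
      rw [sq]
      exact ENNReal.mul_lt_mul ha hb
    by_contra hcon
    exact absurd h3 (not_lt.2 (pow_le_pow_left' (not_lt.1 hcon) 2))

lemma amgm (x y z : ENNReal) (h : x + y ≤ 2 * z) : x * y ≤ z ^ 2 := by
  by_cases hz : z = ⊤
  · simp [hz]
  have hx : x ≠ ⊤ := by
    rintro rfl
    simp [ENNReal.mul_eq_top, hz] at h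
  have hy : y ≠ ⊤ := by
    rintro rfl
    simp [ENNReal.mul_eq_top, hz] at h
  lift x to NNReal using hx
  lift y to NNReal using hy
  lift z to NNReal using hz
  norm_cast at *
  have h' : (x:ℝ) + y ≤ 2 * z := by exact_mod_cast h
  have : (x:ℝ) * y ≤ z ^ 2 := by
    have := x.2; have := y.2; have := z.2
    nlinarith [sq_nonneg ((x:ℝ) - y)]
  exact_mod_cast this

lemma pl_bdd (f g h : ℝ → ENNReal) (hf : Measurable f) (hg : Measurable g) (hh : Measurable h)
    (a b : ENNReal) (ha : a ≠ ⊤) (hb : b ≠ ⊤)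
    (hf1 : ∀ x, f x ≤ a) (hg1 : ∀ x, g x ≤ b)
    (H : ∀ x y, f x * g y ≤ h ((1 / 2 : ℝ) • (x + y)) ^ 2) :
    (∫⁻ x, f x) * (∫⁻ x, g x) ≤ (∫⁻ x, h x) ^ 2 := by
  replace ha : (⨆ x, f x) ≠ ⊤ := ne_top_of_le_ne_top ha (iSup_le hf1)
  replace hb : (⨆ x, g x) ≠ ⊤ := ne_top_of_le_ne_top hb (iSup_le hg1)
  clear hf1 hg1
  have hf1 := fun x => le_iSup f x
  have hg1 := fun x => le_iSup g x
  have hfs : ∀ t < ⨆ x, f x, ∃ x, t < f x := fun t ht => lt_iSup_iff.1 ht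
  have hgs : ∀ t < ⨆ x, g x, ∃ x, t < g x := fun t ht => lt_iSup_iff.1 ht
  generalize (⨆ x, f x) = a at *
  generalize (⨆ x, g x) = b at *
  by_cases ha0 : a = 0
  · have : ∀ x, f x = 0 := fun x => by simpa [ha0] using hf1 x
    simp [this]
  by_cases hb0 : b = 0
  · have : ∀ x, g x = 0 := fun x => by simpa [hb0] using hg1 x
    simp [this]
  obtain ⟨c, hc0, hc, hcab⟩ : ∃ c : ENNReal, c ≠ 0 ∧ c ≠ ⊤ ∧ c ^ 2 = a * b := by
    lift a to NNReal using ha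
    lift b to NNReal using hb
    refine ⟨(NNReal.sqrt (a * b) : NNReal), ?_, by simp, ?_⟩
    · simp at ha0 hb0 ⊢
      exact ⟨ha0, hb0⟩
    · norm_cast
      simp
  have key := pl_one (fun x => a⁻¹ * f x) (fun x => b⁻¹ * g x) (fun x => c⁻¹ * h x)
    (hf.const_mul _) (hg.const_mul _) (hh.const_mul _) ?_ ?_ ?_ ?_ ?_
  · rw [lintegral_const_mul _ hf, lintegral_const_mul _ hg, lintegral_const_mul _ hh] at key
    have k2 := amgm _ _ _ key
    generalize (∫⁻ x, f x) = F at *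
    generalize (∫⁻ x, g x) = G at *
    generalize (∫⁻ x, h x) = I at *
    calc F * G = (a * a⁻¹) * (b * b⁻¹) * (F * G) := by
          rw [ENNReal.mul_inv_cancel ha0 ha, ENNReal.mul_inv_cancel hb0 hb]; simp
      _ = (a * b) * ((a⁻¹ * F) * (b⁻¹ * G)) := by ring
      _ ≤ (a * b) * (c⁻¹ * I) ^ 2 := by gcongr
      _ = (c * c⁻¹) ^ 2 * I ^ 2 := by rw [← hcab]; ring
      _ = I ^ 2 := by rw [ENNReal.mul_inv_cancel hc0 hc]; simp
  · intro x
    rw [mul_comm, ← div_eq_mul_inv]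
    exact ENNReal.div_le_of_le_mul (by simpa using hf1 x)
  · intro x
    rw [mul_comm, ← div_eq_mul_inv]
    exact ENNReal.div_le_of_le_mul (by simpa using hg1 x)
  · intro t ht
    obtain ⟨x, hx⟩ := hfs (t * a) (by
      calc t * a < 1 * a := by rwa [ENNReal.mul_lt_mul_iff_left ha0 ha]
        _ = a := one_mul a)
    refine ⟨x, ?_⟩
    rw [mul_comm, ← div_eq_mul_inv]
    rwa [ENNReal.lt_div_iff_mul_lt (.inl ha0) (.inl ha)]
  · intro t ht
    obtain ⟨x, hx⟩ := hgs (t * b) (by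
      calc t * b < 1 * b := by rwa [ENNReal.mul_lt_mul_iff_left hb0 hb]
        _ = b := one_mul b)
    refine ⟨x, ?_⟩
    rw [mul_comm, ← div_eq_mul_inv]
    rwa [ENNReal.lt_div_iff_mul_lt (.inl hb0) (.inl hb)]
  · intro x y
    have e : (c⁻¹) ^ 2 = a⁻¹ * b⁻¹ := by
      rw [← ENNReal.inv_pow, hcab, ENNReal.mul_inv (.inl ha0) (.inl ha)]
    calc a⁻¹ * f x * (b⁻¹ * g y) = (a⁻¹ * b⁻¹) * (f x * g y) := by ring
      _ ≤ (a⁻¹ * b⁻¹) * h ((1 / 2 : ℝ) • (x + y)) ^ 2 := by gcongr; exact H x y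
      _ = _ := by rw [← e]; ring

lemma trunc (f : ℝ → ENNReal) (hf : Measurable f) :
    ∫⁻ x, f x = ⨆ n : ℕ, ∫⁻ x, min (f x) n := by
  rw [← lintegral_iSup (fun n => hf.min measurable_const)]
  · congr 1; ext x
    rw [← inf_iSup_eq, ENNReal.iSup_natCast]; simp
  · intro n m hnm x
    exact min_le_min le_rfl (by exact_mod_cast hnm)

lemma pl_volume : PLProp (volume : Measure ℝ) := by
  intro f g h hf hg hh H
  rw [trunc f hf, trunc g hg]
  simp only [ENNReal.iSup_mul, ENNReal.mul_iSup, iSup_le_iff]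
  intro i j
  refine pl_bdd _ _ h (hf.min measurable_const) (hg.min measurable_const) hh _ _
    (ENNReal.natCast_ne_top _) (ENNReal.natCast_ne_top _) (fun x => min_le_right _ _) (fun x => min_le_right _ _) ?_
  intro x y
  exact (mul_le_mul' (min_le_left _ _) (min_le_left _ _)).trans (H x y)

lemma pl_gaussian : PLProp (gaussianReal 0 1) := by
  intro f g h hf hg hh H
  rw [gaussianReal_of_var_ne_zero _ one_ne_zero]
  have hm := measurable_gaussianPDF 0 1
  simp only [lintegral_withDensity_eq_lintegral_mul _ hm, hf, hg, hh, Pi.mul_apply]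
  refine pl_volume _ _ _ (hm.mul hf) (hm.mul hg) (hm.mul hh) ?_
  intro x y
  have e : gaussianPDF 0 1 x * gaussianPDF 0 1 y ≤ (gaussianPDF 0 1 ((1 / 2 : ℝ) • (x + y))) ^ 2 := by
    simp only [gaussianPDF]
    rw [← ENNReal.ofReal_mul (gaussianPDFReal_nonneg _ _ _), ← ENNReal.ofReal_pow (gaussianPDFReal_nonneg _ _ _)]
    apply ENNReal.ofReal_le_ofReal
    simp only [gaussianPDFReal]
    rw [mul_pow, mul_mul_mul_comm, ← sq, ← Real.exp_add, ← Real.exp_nat_mul]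
    gcongr
    simp
    nlinarith [sq_nonneg (x - y)]
  calc _ = (gaussianPDF 0 1 x * gaussianPDF 0 1 y) * (f x * g y) := by ring
    _ ≤ (gaussianPDF 0 1 ((1 / 2 : ℝ) • (x + y))) ^ 2 * h ((1 / 2 : ℝ) • (x + y)) ^ 2 :=
      mul_le_mul' e (H x y)
    _ = _ := by ring

lemma PLProp.prod {V W : Type*} [AddCommGroup V] [Module ℝ V] [MeasurableSpace V]
    [AddCommGroup W] [Module ℝ W] [MeasurableSpace W] {μ : Measure V} {ν : Measure W}
    [SFinite μ] [SFinite ν] (hμ : PLProp μ) (hν : PLProp ν) : PLProp (μ.prod ν) := by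
  intro f g h hf hg hh H
  rw [lintegral_prod _ hf.aemeasurable, lintegral_prod _ hg.aemeasurable,
    lintegral_prod _ hh.aemeasurable]
  refine hμ _ _ _ hf.lintegral_prod_right' hg.lintegral_prod_right' hh.lintegral_prod_right' ?_
  intro x y
  exact hν _ _ _ (by fun_prop) (by fun_prop) (by fun_prop) fun z w => H (x, z) (y, w)

lemma PLProp.map {V W : Type*} [AddCommGroup V] [Module ℝ V] [MeasurableSpace V]
    [AddCommGroup W] [Module ℝ W] [MeasurableSpace W] {μ : Measure V} (hμ : PLProp μ)
    (T : V →ₗ[ℝ] W) (hT : Measurable T) : PLProp (μ.map T) := by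
  intro f g h hf hg hh H
  simp only [lintegral_map, hf, hg, hh, hT]
  refine hμ _ _ _ (hf.comp hT) (hg.comp hT) (hh.comp hT) ?_
  intro x y
  simpa using H (T x) (T y)

lemma pl_pi (n : ℕ) : PLProp (Measure.pi (fun _ : Fin n => gaussianReal 0 1)) := by
  induction n with
  | zero =>
    intro f g h hf hg hh H
    rw [Measure.pi_of_empty _ 0]
    simp only [lintegral_dirac]
    convert H 0 0 using 3
  | succ n ih =>
    have e := (measurePreserving_piFinSuccAbove (fun _ : Fin (n+1) => gaussianReal 0 1) 0).symm
    rw [← e.map_eq]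
    have := (pl_gaussian.prod ih).map
      (T := { toFun := (MeasurableEquiv.piFinSuccAbove (fun _ => ℝ) (0 : Fin (n+1))).symm
              map_add' := ?_
              map_smul' := ?_ }) (MeasurableEquiv.measurable _)
    · exact this
    · intro x y
      ext i
      refine Fin.cases ?_ (fun j => ?_) i <;> simp [MeasurableEquiv.piFinSuccAbove]
    · intro c x
      ext i
      refine Fin.cases ?_ (fun j => ?_) i <;> simp [MeasurableEquiv.piFinSuccAbove]

lemma PLProp.anderson {V : Type*} [AddCommGroup V] [Module ℝ V] [MeasurableSpace V]
    [MeasurableAdd V] [MeasurableNeg V] {μ : Measure V} (hμ : PLProp μ) (hneg : μ.map (fun x => -x) = μ)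
    (D : Set V) (hD : MeasurableSet D) (hc : Convex ℝ D) (hs : ∀ x ∈ D, -x ∈ D) (y : V) :
    μ {x | x + y ∈ D} ≤ μ D := by
  have m1 : MeasurableSet {x | x + y ∈ D} := hD.preimage (measurable_add_const y)
  have m2 : MeasurableSet {x | x + -y ∈ D} := hD.preimage (measurable_add_const (-y))
  have e : μ {x | x + -y ∈ D} = μ {x | x + y ∈ D} := by
    conv_lhs => rw [← hneg, Measure.map_apply measurable_neg m2]
    congr 1; ext x
    constructor
    · intro h; simpa [add_comm] using hs _ h
    · intro h; simpa [add_comm] using hs _ h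
  have := hμ ({x | x + y ∈ D}.indicator 1) ({x | x + -y ∈ D}.indicator 1) (D.indicator 1)
    (measurable_one.indicator m1) (measurable_one.indicator m2) (measurable_one.indicator hD) ?_
  · rw [lintegral_indicator_one m1, lintegral_indicator_one m2, lintegral_indicator_one hD, e,
      ← sq] at this
    exact (ENNReal.pow_le_pow_left_iff two_ne_zero).1 this
  · intro u v
    by_cases hu : u + y ∈ D
    swap
    · rw [Set.indicator_of_notMem (by exact hu)]; simp
    by_cases hv : v + -y ∈ D
    swap
    · rw [Set.indicator_of_notMem (s := {x | x + -y ∈ D}) (by exact hv)]; simp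
    have : (1 / 2 : ℝ) • (u + v) ∈ D := by
      have := hc hu hv (a := 1/2) (b := 1/2) (by norm_num) (by norm_num) (by norm_num)
      rw [← smul_add] at this
      convert this using 2
      abel
    rw [Set.indicator_of_mem this]
    simp [Set.indicator_of_mem, hu, hv]

open scoped MatrixOrder in
lemma pl_fin {n : ℕ} (ν : Measure (EuclideanSpace ℝ (Fin n)))
    (h : ∀ L : EuclideanSpace ℝ (Fin n) →L[ℝ] ℝ, ∃ v : NNReal, ν.map L = gaussianReal 0 v) :
    PLProp ν ∧ ν.map (fun x => -x) = ν := by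
  have hG : IsGaussian ν := isGaussian_of_map_eq_gaussianReal fun L => ⟨0, h L⟩
  have hmean : ν[id] = 0 := by
    ext i
    obtain ⟨v, hv⟩ := h (EuclideanSpace.proj i)
    have h1 : ∫ x, (EuclideanSpace.proj i : EuclideanSpace ℝ (Fin n) →L[ℝ] ℝ) x ∂ν = 0 := by
      have := integral_map (μ := ν) (φ := (EuclideanSpace.proj i : EuclideanSpace ℝ (Fin n) →L[ℝ] ℝ))
        (f := fun x : ℝ => x) (by fun_prop) (by fun_prop)
      rw [← this, hv, integral_id_gaussianReal]
    rw [ContinuousLinearMap.integral_comp_id_comm IsGaussian.integrable_id] at h1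
    simpa using h1
  constructor
  · let S : Matrix (Fin n) (Fin n) ℝ := fun i j =>
      covarianceBilin ν (EuclideanSpace.basisFun _ ℝ i) (EuclideanSpace.basisFun _ ℝ j)
    have hS' : ∀ x y : EuclideanSpace ℝ (Fin n), x.ofLp ⬝ᵥ S.mulVec y.ofLp = covarianceBilin ν x y := by
      intro x y
      conv_rhs => rw [← (EuclideanSpace.basisFun _ ℝ).sum_repr x, ← (EuclideanSpace.basisFun _ ℝ).sum_repr y]
      simp only [map_sum, sum_apply, map_smul, smul_apply,
        dotProduct, Matrix.mulVec, S, EuclideanSpace.basisFun_repr, smul_eq_mul, Finset.mul_sum]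
      rw [Finset.sum_comm]
      refine Finset.sum_congr rfl fun i _ => Finset.sum_congr rfl fun j _ => ?_
      ring
    have hS : S.PosSemidef := by
      refine Matrix.PosSemidef.of_dotProduct_mulVec_nonneg ?_ ?_
      · ext i j
        rw [Matrix.conjTranspose_apply, star_trivial]
        exact covarianceBilin_comm _ _
      · intro x
        have := hS' (WithLp.toLp 2 x) (WithLp.toLp 2 x)
        simp only [star_trivial]
        rw [this]
        exact covarianceBilin_self_nonneg _
    have e : ν = multivariateGaussian 0 S := by
      apply IsGaussian.ext
      · rw [hmean]; simp
      · ext x y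
        rw [covarianceBilin_multivariateGaussian hS]
        exact (hS' x y).symm
    rw [e, multivariateGaussian]
    simp only [zero_add]
    have hstd : PLProp (stdGaussian (EuclideanSpace ℝ (Fin n))) := by
      have := (pl_pi (Module.finrank ℝ (EuclideanSpace ℝ (Fin n)))).map
        (T := { toFun := fun x ↦ ∑ i, x i • stdOrthonormalBasis ℝ (EuclideanSpace ℝ (Fin n)) i
                map_add' := by intro x y; simp [add_smul, Finset.sum_add_distrib]
                map_smul' := by intro c x; simp [mul_smul, Finset.smul_sum] })
        (by dsimp; fun_prop)
      exact this
    exact hstd.map (Matrix.toEuclideanCLM (𝕜 := ℝ) (CFC.sqrt S)).toLinearMap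
      (ContinuousLinearMap.measurable _)
  · apply IsGaussian.ext
    · rw [hmean, integral_map (by fun_prop) (by fun_prop)]
      simp only [id]
      rw [integral_neg]
      simpa using hmean
    · ext x y
      have : (fun x : EuclideanSpace ℝ (Fin n) => -x) =
        ⇑(-ContinuousLinearMap.id ℝ (EuclideanSpace ℝ (Fin n))) := by ext; simp
      rw [this, covarianceBilin_map IsGaussian.memLp_two_id]
      have hid : ContinuousLinearMap.adjoint (ContinuousLinearMap.id ℝ (EuclideanSpace ℝ (Fin n))) =
          ContinuousLinearMap.id ℝ _ := by
        symm
        rw [ContinuousLinearMap.eq_adjoint_iff]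
        intro x y; rfl
      simp [hid]

section infdim

variable {E : Type*} [NormedAddCommGroup E] [NormedSpace ℝ E] [SecondCountableTopology E]
    [MeasurableSpace E] [BorelSpace E]

lemma anderson_cyl (μ : Measure E) 
    (h : ∀ L : E →L[ℝ] ℝ, ∃ v : NNReal, μ.map L = gaussianReal 0 v)
    {N : ℕ} (L : Fin N → E →L[ℝ] ℝ) (c : Fin N → ℝ) (y : E) :
    μ {x | ∀ i, |L i (x + y)| ≤ c i} ≤ μ {x | ∀ i, |L i x| ≤ c i} := by
  let T : E →L[ℝ] EuclideanSpace ℝ (Fin N) :=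
    (EuclideanSpace.equiv (Fin N) ℝ).symm.toContinuousLinearMap ∘L ContinuousLinearMap.pi L
  have hT : ∀ x i, (T x).ofLp i = L i x := fun x i => rfl
  have hTm : Measurable T := T.measurable
  obtain ⟨h1, h2⟩ := pl_fin (μ.map T) (fun L' => by
    rw [Measure.map_map L'.measurable hTm]
    exact h (L' ∘L T))
  let D : Set (EuclideanSpace ℝ (Fin N)) := {z | ∀ i, |z.ofLp i| ≤ c i}
  have hD : MeasurableSet D := by
    have : D = ⋂ i, {z | |z.ofLp i| ≤ c i} := by ext; simp [D]
    rw [this]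
    exact MeasurableSet.iInter fun i => measurableSet_le (by fun_prop) (by fun_prop)
  have hc : Convex ℝ D := by
    intro a ha b hb s t hs ht hst i
    have := ha i
    have := hb i
    rw [abs_le] at *
    simp only [PiLp.add_apply, PiLp.smul_apply, smul_eq_mul]
    have e : c i = s * c i + t * c i := by rw [← add_mul, hst, one_mul]
    constructor <;> nlinarith
  have := h1.anderson h2 D hD hc (fun x hx i => by simpa using hx i) (T y)
  rw [Measure.map_apply hTm hD, Measure.map_apply hTm (show MeasurableSet {x | x + T y ∈ D} from hD.preimage (measurable_add_const _))] at this
  have e : {x | ∀ i, |L i (x + y)| ≤ c i} = T ⁻¹' {x | x + T y ∈ D} := by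
    ext x; simp [D, hT]
  rw [e]
  exact this

lemma anderson_closed (μ : Measure E) [IsFiniteMeasure μ]
    (h : ∀ L : E →L[ℝ] ℝ, ∃ v : NNReal, μ.map L = gaussianReal 0 v)
    (D : Set E) (hD : IsClosed D) (hc : Convex ℝ D) (hs : ∀ x ∈ D, -x ∈ D) (y : E) :
    μ {x | x + y ∈ D} ≤ μ D := by
  have sep : ∀ x : (Dᶜ : Set E), ∃ p : (E →L[ℝ] ℝ) × ℝ, (∀ a ∈ D, |p.1 a| ≤ p.2) ∧ p.2 < |p.1 x| := by
    rintro ⟨x, hx⟩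
    obtain ⟨f, u, h1, h2⟩ := geometric_hahn_banach_closed_point hc hD hx
    refine ⟨(f, u), fun a ha => abs_le.2 ⟨?_, (h1 a ha).le⟩, h2.trans_le (le_abs_self _)⟩
    have := h1 _ (hs a ha)
    rw [map_neg] at this
    linarith
  choose p hp1 hp2 using sep
  obtain ⟨T, hTc, hT⟩ := TopologicalSpace.isOpen_iUnion_countable
    (fun x => {z | (p x).2 < |(p x).1 z|})
    (fun x => isOpen_lt continuous_const (by fun_prop))
  have hTD : ∀ z, z ∈ D ↔ ∀ x ∈ T, |(p x).1 z| ≤ (p x).2 := by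
    intro z
    constructor
    · intro hz x _
      exact hp1 x z hz
    · intro hz
      by_contra hzD
      have : z ∈ ⋃ x, {z | (p x).2 < |(p x).1 z|} := Set.mem_iUnion.2 ⟨⟨z, hzD⟩, hp2 ⟨z, hzD⟩⟩
      rw [← hT] at this
      simp only [Set.mem_iUnion] at this
      obtain ⟨x, hx, hx'⟩ := this
      exact absurd (hz x hx) (not_le.2 hx')
  rcases T.eq_empty_or_nonempty with hT0 | hT0
  · have : D = Set.univ := by ext z; simp [hTD, hT0]
    simp [this]
  obtain ⟨s, hs'⟩ := hTc.exists_eq_range hT0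
  let DN : ℕ → Set E := fun N => {z | ∀ i : Fin N, |(p (s i)).1 z| ≤ (p (s i)).2}
  have hDN : D = ⋂ N, DN N := by
    ext z
    rw [hTD, hs']
    simp only [Set.mem_iInter, Set.forall_mem_range]
    constructor
    · intro hz N i; exact hz i
    · intro hz n; exact hz (n+1) ⟨n, by omega⟩
  have hm : ∀ N, MeasurableSet (DN N) := by
    intro N
    have : DN N = ⋂ i : Fin N, {z | |(p (s i)).1 z| ≤ (p (s i)).2} := by ext; simp [DN]
    rw [this]
    exact MeasurableSet.iInter fun i => measurableSet_le (by fun_prop) (by fun_prop)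
  have hlim : Filter.Tendsto (fun N => μ (DN N)) Filter.atTop (nhds (μ D)) := by
    rw [hDN]
    apply tendsto_measure_iInter_atTop (fun N => (hm N).nullMeasurableSet)
    · intro a b hab z hz i
      exact hz ⟨i, by omega⟩
    · exact ⟨0, measure_ne_top _ _⟩
  refine ge_of_tendsto' hlim fun N => ?_
  refine le_trans (measure_mono ?_) (anderson_cyl μ h (fun i : Fin N => (p (s i)).1) (fun i => (p (s i)).2) y)
  intro x hx i
  exact (hTD _).1 hx (s i) (by rw [hs']; exact ⟨_, rfl⟩)

lemma anderson_indep {Ω : Type*} [MeasurableSpace Ω] (P : Measure Ω) [IsProbabilityMeasure P]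
    (X Y : Ω → E) (hX : Measurable X) (hY : Measurable Y)
    (h : ∀ L : E →L[ℝ] ℝ, ∃ v : NNReal, P.map (fun ω => L (X ω)) = gaussianReal 0 v)
    (hind : IndepFun X Y P)
    (D : Set E) (hD : IsClosed D) (hc : Convex ℝ D) (hs : ∀ x ∈ D, -x ∈ D) :
    P {ω | X ω + Y ω ∈ D} ≤ P {ω | X ω ∈ D} := by
  have : IsProbabilityMeasure (P.map X) := Measure.isProbabilityMeasure_map hX.aemeasurable
  have : IsProbabilityMeasure (P.map Y) := Measure.isProbabilityMeasure_map hY.aemeasurable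
  have hprod := (indepFun_iff_map_prod_eq_prod_map_map hX.aemeasurable hY.aemeasurable).1 hind
  have hDm : MeasurableSet {q : E × E | q.1 + q.2 ∈ D} :=
    hD.measurableSet.preimage (measurable_fst.add measurable_snd)
  have e1 : P {ω | X ω + Y ω ∈ D} = P.map (fun ω => (X ω, Y ω)) {q : E × E | q.1 + q.2 ∈ D} := by
    rw [Measure.map_apply (hX.prodMk hY) hDm]; rfl
  have e2 : P {ω | X ω ∈ D} = P.map X D := by
    rw [Measure.map_apply hX hD.measurableSet]; rfl
  rw [e1, e2, hprod, Measure.prod_apply_symm hDm]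
  calc ∫⁻ y, (P.map X) ((fun x => (x, y)) ⁻¹' {q : E × E | q.1 + q.2 ∈ D}) ∂(P.map Y)
      ≤ ∫⁻ y, (P.map X) D ∂(P.map Y) := by
        apply lintegral_mono
        intro y
        refine anderson_closed (P.map X) ?_ D hD hc hs y
        intro L
        rw [Measure.map_map L.measurable hX]
        exact h L
    _ = _ := by simp

end infdim

lemma approx_ball {E B : Type*} [NormedAddCommGroup E] [NormedSpace ℝ E] 
    [MeasurableSpace E] [BorelSpace E]
    [NormedAddCommGroup B] [NormedSpace ℝ B] [CompleteSpace B]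
    [TopologicalSpace.SeparableSpace B]
    (ι : B →L[ℝ] E) (hι : Function.Injective ι) (μ : Measure E) [IsFiniteMeasure μ] (r : ℝ)
    (t : ENNReal) (ht : t < μ (ι '' Metric.closedBall 0 r)) :
    ∃ D ⊆ ι '' Metric.closedBall 0 r, IsClosed D ∧ Convex ℝ D ∧ (∀ x ∈ D, -x ∈ D) ∧ t < μ D := by
  borelize B
  have : SecondCountableTopology B := UniformSpace.secondCountable_of_separable B
  have : PolishSpace B := inferInstance
  have hemb : MeasurableEmbedding ι := ι.continuous.measurableEmbedding hι
  have : IsFiniteMeasure (μ.comap ι) := ⟨by rw [hemb.comap_apply]; exact measure_lt_top _ _⟩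
  rw [← hemb.comap_apply] at ht
  obtain ⟨C, hC, hCc, hCt⟩ := (Metric.isClosed_closedBall.measurableSet
    (α := B)).exists_lt_isCompact ht
  let H : Set B := closure (convexHull ℝ (C ∪ -C))
  have hsub : H ⊆ Metric.closedBall 0 r := by
    refine closure_minimal (convexHull_min ?_ (convex_closedBall _ _)) Metric.isClosed_closedBall
    rintro x (hx | hx)
    · exact hC hx
    · have := hC hx
      simpa using this
  have hHc : IsCompact H := by
    have : TotallyBounded (convexHull ℝ (C ∪ -C)) := (hCc.union hCc.neg).totallyBounded.convexHull
    exact isCompact_iff_totallyBounded_isComplete.2 ⟨this.closure, isClosed_closure.isComplete⟩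
  have hHconv : Convex ℝ H := (convex_convexHull ℝ _).closure
  have hneg : -H = H := by
    simp only [H]
    rw [neg_closure, ← convexHull_neg]
    simp [Set.union_comm]
  refine ⟨ι '' H, Set.image_mono hsub, (hHc.image ι.continuous).isClosed,
    hHconv.linear_image ι.toLinearMap, ?_, ?_⟩
  · rintro _ ⟨x, hx, rfl⟩
    refine ⟨-x, ?_, by simp⟩
    rw [← hneg]
    simpa using hx
  · rw [← hemb.comap_apply]
    refine hCt.trans_le (measure_mono ?_)
    exact fun x hx => subset_closure (subset_convexHull ℝ _ (.inl hx))


/-- for two independent centered Gaussian random elements `X₁`, `X₂` of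
`C(K, ℝ)` (`K ⊆ ℝ^d` compact), a separable Banach space `B` continuously embedded in
`C(K, ℝ)` via an injective continuous linear map `ι`, and any `r > 0`,
`P(X₁ + X₂ ∈ ι({‖·‖_B ≤ r})) ≤ P(X₁ ∈ ι({‖·‖_B ≤ r}))`. -/
theorem anderson_sum_field {d : ℕ} (K : Set (EuclideanSpace ℝ (Fin d)))
    (hK : IsCompact K)
    {B : Type*} [NormedAddCommGroup B] [NormedSpace ℝ B] [CompleteSpace B]
    [TopologicalSpace.SeparableSpace B]
    (ι : B →L[ℝ] C(K, ℝ)) (hι : Function.Injective ι)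
    {Ω : Type*} [MeasurableSpace Ω] (P : Measure Ω) [IsProbabilityMeasure P]
    [MeasurableSpace C(K, ℝ)] [BorelSpace C(K, ℝ)]
    (X₁ X₂ : Ω → C(K, ℝ)) (hX₁meas : Measurable X₁) (hX₂meas : Measurable X₂)
    (hX₁gauss : ∀ L : C(K, ℝ) →L[ℝ] ℝ,
      ∃ v : NNReal, P.map (fun ω => L (X₁ ω)) = gaussianReal 0 v)
    (hX₂gauss : ∀ L : C(K, ℝ) →L[ℝ] ℝ,
      ∃ v : NNReal, P.map (fun ω => L (X₂ ω)) = gaussianReal 0 v)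
    (hindep : IndepFun X₁ X₂ P)
    (r : ℝ) (hr : 0 < r) :
    P {ω | ∃ b : B, ‖b‖ ≤ r ∧ ι b = X₁ ω + X₂ ω}
      ≤ P {ω | ∃ b : B, ‖b‖ ≤ r ∧ ι b = X₁ ω} := by

  have : CompactSpace K := isCompact_iff_compactSpace.1 hK
  have : SecondCountableTopology C(K, ℝ) := inferInstance
  have hball : ∀ x : C(K, ℝ), (∃ b : B, ‖b‖ ≤ r ∧ ι b = x) ↔ x ∈ ι '' Metric.closedBall 0 r := by
    intro x; simp
  simp only [hball]
  borelize B
  have : SecondCountableTopology B := UniformSpace.secondCountable_of_separable B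
  have hA : MeasurableSet (ι '' Metric.closedBall 0 r) :=
    (ι.continuous.measurableEmbedding hι).measurableSet_image.2 Metric.isClosed_closedBall.measurableSet
  have hS : Measurable (fun ω => X₁ ω + X₂ ω) := hX₁meas.add hX₂meas
  have e : P {ω | X₁ ω + X₂ ω ∈ ι '' Metric.closedBall 0 r} =
      P.map (fun ω => X₁ ω + X₂ ω) (ι '' Metric.closedBall 0 r) := by
    rw [Measure.map_apply hS hA]; rfl
  rw [e]
  refine le_of_forall_lt fun t ht => ?_
  obtain ⟨D, hDs, hDcl, hDc, hDn, hDt⟩ := approx_ball ι hι _ r t ht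
  refine hDt.trans_le ?_
  rw [Measure.map_apply hS hDcl.measurableSet]
  refine (anderson_indep P X₁ X₂ hX₁meas hX₂meas hX₁gauss hindep D hDcl hDc hDn).trans ?_
  exact measure_mono fun ω hω => hDs hω
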